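/- For every j with 0 ≤ j ≤ n, every α ∈ ℝ and every C^∞ function f on X one has e^{R_j} · J[ (L^T − α σ_j)( e^{−R_j} · (J f) ) ] = L f − (1−α) σ_j f, i.e. as operators on smooth functions e^{R_j} J (L^T − α σ_j) J e^{−R_j} = L − (1−α) σ_j; in particular L − ασ_j is conjugate to the time reversal of the formal adjoint of L − (1−α)σ_j. -/

import Mathlib

open scoped BigOperators

noncomputable section

/-- `Vc d` : vectors in ℝ^d. -/
abbrev Vc (d : ℕ) := Fin d → ℝ
/-- Configurations of `m` oscillators. -/
abbrev Cfg (m d : ℕ) := Fin m → Vc d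
/-- Phase space X = p × q × r₁ × rₙ (for a chain of `m` oscillators). -/
abbrev Phs (m d : ℕ) := Cfg m d × Cfg m d × Vc d × Vc d

variable {m d : ℕ}

/-- unit coordinate vector in the p-block -/
def eP (i : Fin m) (a : Fin d) : Phs m d := (Pi.single i (Pi.single a 1), 0, 0, 0)
/-- unit coordinate vector in the q-block -/
def eQ (i : Fin m) (a : Fin d) : Phs m d := (0, Pi.single i (Pi.single a 1), 0, 0)
/-- unit coordinate vector in the r₁-block -/
def eR1 (a : Fin d) : Phs m d := (0, 0, Pi.single a 1, 0)
/-- unit coordinate vector in the rₙ-block -/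
def eRn (a : Fin d) : Phs m d := (0, 0, 0, Pi.single a 1)

/-- directional (partial) derivative -/
def PD (f : Phs m d → ℝ) (x v : Phs m d) : ℝ := fderiv ℝ f x v

variable {n : ℕ}

/-- total potential V(q) = Σᵢ U⁽¹⁾(qᵢ) + Σᵢ U⁽²⁾(qᵢ − qᵢ₊₁) of a chain of n+2 oscillators -/
def Vtot (U1 U2 : Vc d → ℝ) (q : Cfg (n+2) d) : ℝ :=
  (∑ i, U1 (q i)) + ∑ i : Fin (n+1), U2 (q i.castSucc - q i.succ)

/-- the generator L of the dynamics of the chain coupled to two reservoirs -/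
def gen (γ lam T1 Tn : ℝ) (U1 U2 : Vc d → ℝ) (f : Phs (n+2) d → ℝ) (x : Phs (n+2) d) : ℝ :=
  (γ * (T1 * ∑ a, PD (fun y => PD f y (eR1 a)) x (eR1 a)
        - ∑ a, x.2.2.1 a * PD f x (eR1 a))
    + lam * ((∑ a, x.1 0 a * PD f x (eR1 a)) - ∑ a, x.2.2.1 a * PD f x (eP 0 a)))
  + (γ * (Tn * ∑ a, PD (fun y => PD f y (eRn a)) x (eRn a)
        - ∑ a, x.2.2.2 a * PD f x (eRn a))
    + lam * ((∑ a, x.1 (Fin.last (n+1)) a * PD f x (eRn a))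
        - ∑ a, x.2.2.2 a * PD f x (eP (Fin.last (n+1)) a)))
  + ∑ i, ((∑ a, x.1 i a * PD f x (eQ i a))
        - ∑ a, fderiv ℝ (Vtot U1 U2) x.2.1 (Pi.single i (Pi.single a 1)) * PD f x (eP i a))

/-- the formal adjoint Lᵀ of L with respect to Lebesgue measure -/
def genT (γ lam T1 Tn : ℝ) (U1 U2 : Vc d → ℝ) (g : Phs (n+2) d → ℝ) (x : Phs (n+2) d) : ℝ :=
  (γ * (T1 * ∑ a, PD (fun y => PD g y (eR1 a)) x (eR1 a)
        + ∑ a, PD (fun y => y.2.2.1 a * g y) x (eR1 a))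
    - lam * ((∑ a, x.1 0 a * PD g x (eR1 a)) - ∑ a, x.2.2.1 a * PD g x (eP 0 a)))
  + (γ * (Tn * ∑ a, PD (fun y => PD g y (eRn a)) x (eRn a)
        + ∑ a, PD (fun y => y.2.2.2 a * g y) x (eRn a))
    - lam * ((∑ a, x.1 (Fin.last (n+1)) a * PD g x (eRn a))
        - ∑ a, x.2.2.2 a * PD g x (eP (Fin.last (n+1)) a)))
  - ∑ i, ((∑ a, x.1 i a * PD g x (eQ i a))
        - ∑ a, fderiv ℝ (Vtot U1 U2) x.2.1 (Pi.single i (Pi.single a 1)) * PD g x (eP i a))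

/-- time reversal (Jf)(p,q,r₁,rₙ) = f(−p,q,r₁,rₙ) -/
def Jop (f : Phs m d → ℝ) : Phs m d → ℝ := fun x => f (-x.1, x.2.1, x.2.2.1, x.2.2.2)

/-- nat-indexed access to the oscillator coordinates (junk value outside the range) -/
def cfgNat (q : Cfg (n+2) d) (k : ℕ) : Vc d := if h : k < n + 2 then q ⟨k, h⟩ else 0

/-- local energies H_k, 0-indexed: k ∈ {0, …, n+1} -/
def Hloc (U1 U2 : Vc d → ℝ) (k : ℕ) (x : Phs (n+2) d) : ℝ :=
  (∑ a, (cfgNat x.1 k a) ^ 2) / 2 + U1 (cfgNat x.2.1 k)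
  + (if k = 0 then 0 else (1/2) * U2 (cfgNat x.2.1 (k-1) - cfgNat x.2.1 k))
  + (if k = n + 1 then 0 else (1/2) * U2 (cfgNat x.2.1 k - cfgNat x.2.1 (k+1)))

/-- heat flows Φ_j, j ∈ {0, …, n+2}: Φ_0 = −λr₁·p_0 is the flow from the left
reservoir into the chain, Φ_{n+2} = λrₙ·p_{n+1} the flow into the right reservoir,
and for 1 ≤ j ≤ n+1, Φ_j is the flow from the (0-indexed) oscillator j−1 to the
oscillator j. -/
def heatFlow (lam : ℝ) (U2 : Vc d → ℝ) (j : ℕ) (x : Phs (n+2) d) : ℝ :=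
  if j = 0 then - lam * ∑ a, x.2.2.1 a * x.1 0 a
  else if j = n + 2 then lam * ∑ a, x.2.2.2 a * x.1 (Fin.last (n+1)) a
  else ∑ a, ((cfgNat x.1 (j-1) a + cfgNat x.1 j a) / 2)
        * fderiv ℝ U2 (cfgNat x.2.1 (j-1) - cfgNat x.2.1 j) (Pi.single a 1)

/-- entropy production σ_j = (1/Tₙ − 1/T₁) Φ_j -/
def sigmaEP (lam T1 Tn : ℝ) (U2 : Vc d → ℝ) (j : ℕ) (x : Phs (n+2) d) : ℝ :=
  (1 / Tn - 1 / T1) * heatFlow lam U2 j x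

/-- two-temperatures Gibbs exponent R_j, j ∈ {0, …, n+2}: the first j oscillators
are weighted with 1/T₁, the remaining ones with 1/Tₙ. -/
def Rj (T1 Tn : ℝ) (U1 U2 : Vc d → ℝ) (j : ℕ) (x : Phs (n+2) d) : ℝ :=
  (1 / T1) * ((∑ a, (x.2.2.1 a) ^ 2) / 2 + ∑ k ∈ Finset.range j, Hloc U1 U2 k x)
  + (1 / Tn) * ((∑ k ∈ Finset.Ico j (n+2), Hloc U1 U2 k x) + (∑ a, (x.2.2.2 a) ^ 2) / 2)

/-! With `b` the drift vector field and `𝓢ᵢ = Tᵢ Δ - rᵢ · ∇` the Ornstein–Uhlenbeck operator of the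
`i`-th reservoir, `L = γ 𝓢₁ + γ 𝓢ₙ + b · ∇` and `Lᵀ = γ 𝓢₁ᵀ + γ 𝓢ₙᵀ - b · ∇`, the field `b` being
divergence free. Since `Tᵢ ∇_{rᵢ} R_j = rᵢ`, conjugation by `e^{-R_j}` turns `𝓢ᵢᵀ` into `𝓢ᵢ`, and it
turns `b · ∇` into `b · ∇ - b · ∇R_j`. Time reversal fixes `𝓢ᵢ` and `R_j` and changes the sign of
`b · ∇` and of `σ_j`. Everything thus reduces to `b · ∇R_j = σ_j`, which is the telescoped local
energy balance `b · ∇H_k = Φ_k - Φ_{k+1}`. -/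

section Calculus

variable {ι E : Type*} [Fintype ι] [NormedAddCommGroup E] [NormedSpace ℝ E]

theorem sum_mul_map_single [DecidableEq ι] (F : (ι → ℝ) →L[ℝ] ℝ) (w : ι → ℝ) :
    ∑ a, w a * F (Pi.single a 1) = F w := by
  conv_rhs => rw [pi_eq_sum_univ' w]
  simp

theorem hasFDerivAt_sum_sq_div_two (A : E →L[ℝ] (ι → ℝ)) (x : E) :
    HasFDerivAt (fun y => (∑ a, A y a ^ 2) / 2)
      (∑ a, A x a • (ContinuousLinearMap.proj a).comp A) x := by
  have hcoord (a : ι) : HasFDerivAt (fun y => A y a) ((ContinuousLinearMap.proj a).comp A) x :=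
    ((ContinuousLinearMap.proj a).comp A).hasFDerivAt
  have hsq := (HasFDerivAt.fun_sum (u := Finset.univ) fun a _ => (hcoord a).pow 2).mul_const
    (2⁻¹ : ℝ)
  refine hsq.congr_fderiv ?_
  ext v
  simp [Finset.mul_sum, mul_assoc]

theorem fderiv_exp_neg_mul {R g : E → ℝ} {x : E} (hR : DifferentiableAt ℝ R x)
    (hg : DifferentiableAt ℝ g x) (v : E) :
    fderiv ℝ (fun y => Real.exp (-R y) * g y) x v =
      Real.exp (-R x) * (fderiv ℝ g x v - fderiv ℝ R x v * g x) := by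
  rw [fderiv_fun_mul hR.fun_neg.exp hg, fderiv_exp hR.fun_neg, fderiv_fun_neg]
  simp only [add_apply, smul_apply, neg_apply, smul_eq_mul]
  ring

/-- The Ornstein–Uhlenbeck operator `T Δ - r · ∇` along the directions `e`. -/
def ornsteinUhlenbeck (T : ℝ) (e : ι → E) (r : E → ι → ℝ) (f : E → ℝ) (x : E) : ℝ :=
  ∑ a, (T * fderiv ℝ (fun y => fderiv ℝ f y (e a)) x (e a) - r x a * fderiv ℝ f x (e a))

/-- The formal adjoint `T Δ + div (r ·)` of the Ornstein–Uhlenbeck operator along the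
directions `e`. -/
def ornsteinUhlenbeckAdjoint (T : ℝ) (e : ι → E) (r : E → ι → ℝ) (g : E → ℝ) (x : E) : ℝ :=
  ∑ a, (T * fderiv ℝ (fun y => fderiv ℝ g y (e a)) x (e a)
    + fderiv ℝ (fun y => r y a * g y) x (e a))

theorem mul_fderiv_fderiv_exp_neg_mul_add {R g l : E → ℝ} {v : E} {T : ℝ} (hR : Differentiable ℝ R)
    (hl : Differentiable ℝ l) (hg : ContDiff ℝ 2 g) (hRl : ∀ y, T * fderiv ℝ R y v = l y) (x : E) :
    T * fderiv ℝ (fun y => fderiv ℝ (fun z => Real.exp (-R z) * g z) y v) x v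
        + fderiv ℝ (fun y => l y * (Real.exp (-R y) * g y)) x v =
      Real.exp (-R x) * (T * fderiv ℝ (fun y => fderiv ℝ g y v) x v - l x * fderiv ℝ g x v) := by
  have hdg : Differentiable ℝ g := hg.differentiable two_ne_zero
  have hdg' : Differentiable ℝ fun y => fderiv ℝ g y v :=
    ((hg.fderiv_right (m := 1) (by norm_num)).clm_apply contDiff_const).differentiable one_ne_zero
  have hexp : Differentiable ℝ fun y => Real.exp (-R y) := hR.fun_neg.exp
  have hlg : Differentiable ℝ fun y => l y * (Real.exp (-R y) * g y) := hl.mul (hexp.mul hdg)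
  have hfirst : (fun y => T * fderiv ℝ (fun z => Real.exp (-R z) * g z) y v) =
      fun y => T * (Real.exp (-R y) * fderiv ℝ g y v) - l y * (Real.exp (-R y) * g y) := by
    funext y
    rw [fderiv_exp_neg_mul (hR y) (hdg y), ← hRl y]
    ring
  have hconst (h : E → ℝ) : T * fderiv ℝ h x v = fderiv ℝ (fun y => T * h y) x v :=
    (congrArg (fun D => D x v) (fderiv_const_smul_field (𝕜 := ℝ) (f := h) T)).symm
  calc
    _ = fderiv ℝ (fun y => T * (Real.exp (-R y) * fderiv ℝ g y v)) x v := by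
      rw [hconst, hfirst, fderiv_fun_sub ((hexp.fun_mul hdg').const_mul T x) (hlg x),
        sub_apply, sub_add_cancel]
    _ = T * (Real.exp (-R x) * (fderiv ℝ (fun y => fderiv ℝ g y v) x v
        - fderiv ℝ R x v * fderiv ℝ g x v)) := by
      rw [← hconst, fderiv_exp_neg_mul (hR x) (hdg' x)]
    _ = _ := by
      rw [← hRl x]
      ring

theorem ornsteinUhlenbeckAdjoint_exp_neg_mul {T : ℝ} {e : ι → E} {r : E → ι → ℝ} {R g : E → ℝ}
    (hR : Differentiable ℝ R) (hr : Differentiable ℝ r) (hg : ContDiff ℝ 2 g)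
    (hRr : ∀ y a, T * fderiv ℝ R y (e a) = r y a) (x : E) :
    ornsteinUhlenbeckAdjoint T e r (fun y => Real.exp (-R y) * g y) x =
      Real.exp (-R x) * ornsteinUhlenbeck T e r g x := by
  rw [ornsteinUhlenbeck, Finset.mul_sum]
  exact Finset.sum_congr rfl fun a _ =>
    mul_fderiv_fderiv_exp_neg_mul_add hR (differentiable_pi.1 hr a) hg (hRr · a) x

theorem ornsteinUhlenbeck_comp {T : ℝ} {e : ι → E} {r : E → ι → ℝ} (J : E ≃L[ℝ] E)
    (he : ∀ a, J (e a) = e a) (hr : ∀ x, r (J x) = r x) (f : E → ℝ) (x : E) :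
    ornsteinUhlenbeck T e r (f ∘ J) x = ornsteinUhlenbeck T e r f (J x) := by
  have hderiv (h : E → ℝ) (y : E) (a : ι) :
      fderiv ℝ (h ∘ J) y (e a) = fderiv ℝ h (J y) (e a) := by
    rw [J.comp_right_fderiv, ContinuousLinearMap.comp_apply, ContinuousLinearEquiv.coe_coe, he]
  have hderiv₂ (a : ι) : fderiv ℝ (fun y => fderiv ℝ f (J y) (e a)) x (e a) =
      fderiv ℝ (fun y => fderiv ℝ f y (e a)) (J x) (e a) :=
    hderiv (fun y => fderiv ℝ f y (e a)) x a
  simp only [ornsteinUhlenbeck, hderiv, hderiv₂, hr]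

end Calculus

section TimeReversal

/-- Time reversal `(p, q, r₁, rₙ) ↦ (-p, q, r₁, rₙ)`, so that `Jop f = f ∘ reversal`. -/
def reversal : Phs m d ≃L[ℝ] Phs m d :=
  (ContinuousLinearEquiv.neg ℝ).prodCongr (ContinuousLinearEquiv.refl ℝ _)

theorem reversal_apply (x : Phs m d) : reversal x = (-x.1, x.2) := rfl

theorem reversal_reversal (x : Phs m d) : reversal (reversal x) = x := by
  simp [reversal_apply]

theorem Jop_eq_comp (f : Phs m d → ℝ) : Jop f = f ∘ reversal := rfl

theorem Jop_apply (f : Phs m d → ℝ) (x : Phs m d) : Jop f x = f (reversal x) := rfl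

theorem Jop_Jop (f : Phs m d → ℝ) : Jop (Jop f) = f := by
  funext x
  rw [Jop_apply, Jop_apply, reversal_reversal]

theorem reversal_eR1 (a : Fin d) : reversal (eR1 a : Phs m d) = eR1 a := by
  simp [reversal_apply, eR1]

theorem reversal_eRn (a : Fin d) : reversal (eRn a : Phs m d) = eRn a := by
  simp [reversal_apply, eRn]

theorem cfgNat_neg (p : Cfg (n + 2) d) (k : ℕ) : cfgNat (-p) k = -cfgNat p k := by
  unfold cfgNat
  split_ifs <;> simp

theorem Hloc_reversal (U1 U2 : Vc d → ℝ) (k : ℕ) (x : Phs (n + 2) d) :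
    Hloc U1 U2 k (reversal x) = Hloc U1 U2 k x := by
  simp [Hloc, reversal_apply, cfgNat_neg]

theorem Rj_reversal (T1 Tn : ℝ) (U1 U2 : Vc d → ℝ) (j : ℕ) (x : Phs (n + 2) d) :
    Rj T1 Tn U1 U2 j (reversal x) = Rj T1 Tn U1 U2 j x := by
  simp only [Rj, Hloc_reversal]
  rfl

theorem heatFlow_reversal (lam : ℝ) (U2 : Vc d → ℝ) (j : ℕ) (x : Phs (n + 2) d) :
    heatFlow lam U2 j (reversal x) = -heatFlow lam U2 j x := by
  simp only [heatFlow, reversal_apply, cfgNat_neg, Pi.neg_apply]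
  split_ifs
  · simp
  · simp
  · rw [← Finset.sum_neg_distrib]
    exact Finset.sum_congr rfl fun a _ => by ring

theorem sigmaEP_reversal (lam T1 Tn : ℝ) (U2 : Vc d → ℝ) (j : ℕ) (x : Phs (n + 2) d) :
    sigmaEP lam T1 Tn U2 j (reversal x) = -sigmaEP lam T1 Tn U2 j x := by
  simp [sigmaEP, heatFlow_reversal]

end TimeReversal

section Drift

/-- The drift vector field `b` of the chain: `L` differentiates along `b`, apart from the
Ornstein–Uhlenbeck operators of the reservoirs. -/
def drift (lam : ℝ) (U1 U2 : Vc d → ℝ) (x : Phs (n + 2) d) : Phs (n + 2) d :=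
  (fun i a => -fderiv ℝ (Vtot U1 U2) x.2.1 (Pi.single i (Pi.single a 1))
      - (if i = 0 then lam * x.2.2.1 a else 0)
      - (if i = Fin.last (n + 1) then lam * x.2.2.2 a else 0),
    x.1, lam • x.1 0, lam • x.1 (Fin.last (n + 1)))

theorem map_eq_sum_coord (F : Phs m d →L[ℝ] ℝ) (v : Phs m d) :
    F v = (∑ i, ∑ a, v.1 i a * F (eP i a)) + (∑ i, ∑ a, v.2.1 i a * F (eQ i a))
      + (∑ a, v.2.2.1 a * F (eR1 a)) + ∑ a, v.2.2.2 a * F (eRn a) := by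
  have hv : v = (∑ i, ∑ a, v.1 i a • eP i a) + (∑ i, ∑ a, v.2.1 i a • eQ i a)
      + (∑ a, v.2.2.1 a • eR1 a) + ∑ a, v.2.2.2 a • eRn a := by
    ext i a <;> simp [eP, eQ, eR1, eRn, Prod.fst_sum, Prod.snd_sum, Pi.single_apply]
  conv_lhs => rw [hv]
  simp only [map_add, map_sum, map_smul, smul_eq_mul]

theorem map_drift (F : Phs (n + 2) d →L[ℝ] ℝ) (lam : ℝ) (U1 U2 : Vc d → ℝ) (x : Phs (n + 2) d) :
    F (drift lam U1 U2 x) =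
      lam * ((∑ a, x.1 0 a * F (eR1 a)) - ∑ a, x.2.2.1 a * F (eP 0 a))
      + lam * ((∑ a, x.1 (Fin.last (n + 1)) a * F (eRn a))
        - ∑ a, x.2.2.2 a * F (eP (Fin.last (n + 1)) a))
      + ∑ i, ((∑ a, x.1 i a * F (eQ i a))
        - ∑ a, fderiv ℝ (Vtot U1 U2) x.2.1 (Pi.single i (Pi.single a 1)) * F (eP i a)) := by
  have hreservoir (j : Fin (n + 2)) (r : Vc d) :
      ∑ i, ∑ a, (if i = j then lam * r a else 0) * F (eP i a) = lam * ∑ a, r a * F (eP j a) := by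
    rw [Finset.sum_comm, Finset.mul_sum]
    simp [ite_mul, mul_assoc]
  rw [map_eq_sum_coord F]
  simp only [drift, Pi.smul_apply, smul_eq_mul, sub_mul, neg_mul, Finset.sum_sub_distrib,
    Finset.sum_neg_distrib, hreservoir, mul_assoc, ← Finset.mul_sum]
  ring

theorem gen_eq (γ lam T1 Tn : ℝ) (U1 U2 : Vc d → ℝ) (f : Phs (n + 2) d → ℝ) (x : Phs (n + 2) d) :
    gen γ lam T1 Tn U1 U2 f x =
      γ * ornsteinUhlenbeck T1 eR1 (·.2.2.1) f x + γ * ornsteinUhlenbeck Tn eRn (·.2.2.2) f x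
        + fderiv ℝ f x (drift lam U1 U2 x) := by
  simp only [gen, ornsteinUhlenbeck, map_drift, PD, Finset.sum_sub_distrib, ← Finset.mul_sum]
  ring

theorem genT_eq (γ lam T1 Tn : ℝ) (U1 U2 : Vc d → ℝ) (g : Phs (n + 2) d → ℝ)
    (x : Phs (n + 2) d) :
    genT γ lam T1 Tn U1 U2 g x =
      γ * ornsteinUhlenbeckAdjoint T1 eR1 (·.2.2.1) g x
        + γ * ornsteinUhlenbeckAdjoint Tn eRn (·.2.2.2) g x
        - fderiv ℝ g x (drift lam U1 U2 x) := by
  simp only [genT, ornsteinUhlenbeckAdjoint, map_drift, PD, Finset.sum_add_distrib,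
    Finset.sum_sub_distrib, ← Finset.mul_sum]
  ring

theorem reversal_drift (lam : ℝ) (U1 U2 : Vc d → ℝ) (x : Phs (n + 2) d) :
    reversal (drift lam U1 U2 x) = -drift lam U1 U2 (reversal x) := by
  ext <;> simp [reversal_apply, drift]

theorem gen_reversal (γ lam T1 Tn : ℝ) (U1 U2 : Vc d → ℝ) (f : Phs (n + 2) d → ℝ)
    (x : Phs (n + 2) d) :
    gen γ lam T1 Tn U1 U2 f (reversal x) =
      γ * ornsteinUhlenbeck T1 eR1 (·.2.2.1) (Jop f) x
        + γ * ornsteinUhlenbeck Tn eRn (·.2.2.2) (Jop f) x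
        - fderiv ℝ (Jop f) x (drift lam U1 U2 x) := by
  have hflow : fderiv ℝ (Jop f) x (drift lam U1 U2 x) =
      -fderiv ℝ f (reversal x) (drift lam U1 U2 (reversal x)) := by
    rw [Jop_eq_comp, reversal.comp_right_fderiv, ContinuousLinearMap.comp_apply,
      ContinuousLinearEquiv.coe_coe, reversal_drift, map_neg]
  rw [gen_eq, hflow, Jop_eq_comp, ornsteinUhlenbeck_comp reversal reversal_eR1 fun _ => rfl,
    ornsteinUhlenbeck_comp reversal reversal_eRn fun _ => rfl, sub_neg_eq_add]

end Drift

section EnergyBalance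

variable {U1 U2 : Vc d → ℝ}

/-- The position or momentum of the oscillator `k` as a linear function of the configuration;
zero for `k` outside the chain, like `cfgNat`. -/
def oscillator (k : ℕ) : Cfg (n + 2) d →L[ℝ] Vc d :=
  if h : k < n + 2 then ContinuousLinearMap.proj ⟨k, h⟩ else 0

theorem oscillator_apply (k : ℕ) (q : Cfg (n + 2) d) : oscillator k q = cfgNat q k := by
  unfold oscillator cfgNat
  split_ifs <;> rfl

theorem cfgNat_val (q : Cfg (n + 2) d) (i : Fin (n + 2)) : cfgNat q i = q i :=
  dif_pos i.isLt

/-- The energy `U⁽²⁾(q_{k-1} - q_k)` of the spring between the oscillators `k - 1` and `k`. There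
are no springs `0` and `n + 2`; setting their energy to zero avoids special cases at both ends. -/
def springEnergy (U2 : Vc d → ℝ) (k : ℕ) (q : Cfg (n + 2) d) : ℝ :=
  if k = 0 ∨ k = n + 2 then 0 else U2 (cfgNat q (k - 1) - cfgNat q k)

/-- The differential of `U⁽²⁾` at the elongation `q_{k-1} - q_k` of the spring `k`, extended by zero
to `k = 0` and `k = n + 2` like `springEnergy`. -/
def springDeriv (U2 : Vc d → ℝ) (k : ℕ) (q : Cfg (n + 2) d) : Vc d →L[ℝ] ℝ :=
  if k = 0 ∨ k = n + 2 then 0 else fderiv ℝ U2 (cfgNat q (k - 1) - cfgNat q k)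

theorem hasFDerivAt_springEnergy (hU2 : Differentiable ℝ U2) (k : ℕ) (q : Cfg (n + 2) d) :
    HasFDerivAt (springEnergy U2 k)
      ((springDeriv U2 k q).comp (oscillator (k - 1) - oscillator k)) q := by
  unfold springEnergy springDeriv
  split_ifs
  · simpa using hasFDerivAt_const (0 : ℝ) q
  · simp only [← oscillator_apply]
    exact (hU2 _).hasFDerivAt.comp q (oscillator (k - 1) - oscillator k).hasFDerivAt

theorem Vtot_eq (U1 U2 : Vc d → ℝ) (q : Cfg (n + 2) d) :
    Vtot U1 U2 q = (∑ i, U1 (q i)) + ∑ i : Fin (n + 1), springEnergy U2 i.succ q := by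
  rw [Vtot]
  congr 1
  refine Finset.sum_congr rfl fun i _ => ?_
  have hi : ¬((i.succ : ℕ) = 0 ∨ (i.succ : ℕ) = n + 2) := by
    rw [Fin.val_succ]
    lia
  rw [springEnergy, if_neg hi, cfgNat_val, ← cfgNat_val q i.castSucc]
  rfl

theorem fderiv_Vtot_apply (hU1 : Differentiable ℝ U1) (hU2 : Differentiable ℝ U2)
    (q v : Cfg (n + 2) d) :
    fderiv ℝ (Vtot U1 U2) q v =
      ∑ i : Fin (n + 2), (fderiv ℝ U1 (q i) (v i)
        + springDeriv U2 (i + 1) q (v i) - springDeriv U2 i q (v i)) := by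
  have hV : HasFDerivAt (Vtot U1 U2)
      ((∑ i, (fderiv ℝ U1 (q i)).comp (ContinuousLinearMap.proj i))
        + ∑ i : Fin (n + 1), (springDeriv U2 i.succ q).comp
          (oscillator (i.succ - 1) - oscillator i.succ)) q := by
    rw [show Vtot U1 U2 = _ from funext (Vtot_eq U1 U2)]
    exact (HasFDerivAt.fun_sum fun i _ =>
      (hU1 (q i)).hasFDerivAt.comp q (hasFDerivAt_apply i q)).add
      (HasFDerivAt.fun_sum fun i _ => hasFDerivAt_springEnergy hU2 i.succ q)
  have hbefore (i : Fin (n + 1)) : cfgNat v (i.succ - 1) = v i.castSucc := cfgNat_val v i.castSucc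
  have hright : ∑ i : Fin (n + 1), springDeriv U2 i.succ q (v i.castSucc) =
      ∑ i : Fin (n + 2), springDeriv U2 (i + 1) q (v i) := by
    simp [Fin.sum_univ_castSucc, springDeriv]
  have hleft : ∑ i : Fin (n + 1), springDeriv U2 i.succ q (v i.succ) =
      ∑ i : Fin (n + 2), springDeriv U2 i q (v i) := by
    simp [Fin.sum_univ_succ (n := n + 1), springDeriv]
  rw [hV.fderiv]
  simp only [add_apply, sum_apply, sub_apply, ContinuousLinearMap.comp_apply,
    ContinuousLinearMap.proj_apply, oscillator_apply, hbefore, cfgNat_val, map_sub,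
    Finset.sum_sub_distrib, Finset.sum_add_distrib, hright, hleft, add_sub_assoc]

theorem fderiv_Vtot_single (hU1 : Differentiable ℝ U1) (hU2 : Differentiable ℝ U2)
    (q : Cfg (n + 2) d) (i : Fin (n + 2)) (w : Vc d) :
    fderiv ℝ (Vtot U1 U2) q (Pi.single i w) =
      fderiv ℝ U1 (q i) w + springDeriv U2 (i + 1) q w - springDeriv U2 i q w := by
  rw [fderiv_Vtot_apply hU1 hU2, Finset.sum_eq_single i]
  · simp
  · intro k _ hk
    simp [Pi.single_eq_of_ne hk]
  · simp

theorem sum_mul_drift_momentum (hU1 : Differentiable ℝ U1) (hU2 : Differentiable ℝ U2) (lam : ℝ)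
    (x : Phs (n + 2) d) (i : Fin (n + 2)) (w : Vc d) :
    ∑ a, w a * (drift lam U1 U2 x).1 i a =
      -(fderiv ℝ U1 (x.2.1 i) w + springDeriv U2 (i + 1) x.2.1 w - springDeriv U2 i x.2.1 w)
        - (if i = 0 then lam * ∑ a, x.2.2.1 a * w a else 0)
        - (if i = Fin.last (n + 1) then lam * ∑ a, x.2.2.2 a * w a else 0) := by
  have hforce : ∑ a, w a * fderiv ℝ (Vtot U1 U2) x.2.1 (Pi.single i (Pi.single a 1)) =
      fderiv ℝ (Vtot U1 U2) x.2.1 (Pi.single i w) :=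
    sum_mul_map_single ((fderiv ℝ (Vtot U1 U2) x.2.1).comp
      (ContinuousLinearMap.single ℝ (fun _ : Fin (n + 2) => Vc d) i)) w
  have hreservoir (P : Prop) [Decidable P] (r : Vc d) :
      ∑ a, w a * (if P then lam * r a else 0) = if P then lam * ∑ a, r a * w a else 0 := by
    split_ifs
    · rw [Finset.mul_sum]
      exact Finset.sum_congr rfl fun a _ => by ring
    · simp
  rw [← fderiv_Vtot_single hU1 hU2, ← hforce, ← hreservoir, ← hreservoir]
  simp only [drift, mul_sub, mul_neg, Finset.sum_sub_distrib, Finset.sum_neg_distrib]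

theorem Hloc_eq (U1 U2 : Vc d → ℝ) (i : Fin (n + 2)) (x : Phs (n + 2) d) :
    Hloc U1 U2 i x = (∑ a, x.1 i a ^ 2) / 2 + U1 (x.2.1 i) + 1 / 2 * springEnergy U2 i x.2.1
      + 1 / 2 * springEnergy U2 (i + 1) x.2.1 := by
  have hi : (i : ℕ) ≠ n + 2 := i.isLt.ne
  simp [Hloc, springEnergy, cfgNat_val, hi]

/-- The momentum of the oscillator `i` as a linear function on phase space. -/
def momentum (i : Fin m) : Phs m d →L[ℝ] Vc d :=
  ContinuousLinearMap.proj i ∘L ContinuousLinearMap.fst ℝ _ _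

/-- The positions of the oscillators as a linear function on phase space. -/
def positions : Phs m d →L[ℝ] Cfg m d :=
  ContinuousLinearMap.fst ℝ _ _ ∘L ContinuousLinearMap.snd ℝ _ _

/-- The variable `r₁` of the left reservoir as a linear function on phase space. -/
def leftBath : Phs m d →L[ℝ] Vc d :=
  ContinuousLinearMap.fst ℝ _ _ ∘L ContinuousLinearMap.snd ℝ _ _ ∘L ContinuousLinearMap.snd ℝ _ _

/-- The variable `rₙ` of the right reservoir as a linear function on phase space. -/
def rightBath : Phs m d →L[ℝ] Vc d :=
  ContinuousLinearMap.snd ℝ _ _ ∘L ContinuousLinearMap.snd ℝ _ _ ∘L ContinuousLinearMap.snd ℝ _ _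

theorem hasFDerivAt_Hloc (hU1 : Differentiable ℝ U1) (hU2 : Differentiable ℝ U2)
    (i : Fin (n + 2)) (x : Phs (n + 2) d) :
    HasFDerivAt (Hloc U1 U2 i)
      ((∑ a, x.1 i a • ContinuousLinearMap.proj a ∘L momentum i)
        + fderiv ℝ U1 (x.2.1 i) ∘L ContinuousLinearMap.proj i ∘L positions
        + (1 / 2 : ℝ) • (springDeriv U2 i x.2.1 ∘L (oscillator (i - 1) - oscillator i)) ∘L positions
        + (1 / 2 : ℝ) • (springDeriv U2 (i + 1) x.2.1 ∘L (oscillator i - oscillator (i + 1)))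
          ∘L positions) x := by
  have hspring (k : ℕ) := ((hasFDerivAt_springEnergy hU2 k x.2.1).comp x
    positions.hasFDerivAt).const_mul (1 / 2 : ℝ)
  rw [show Hloc U1 U2 i = _ from funext (Hloc_eq U1 U2 i)]
  exact (((hasFDerivAt_sum_sq_div_two (momentum i) x).add
    ((hU1 (x.2.1 i)).hasFDerivAt.comp x
      (ContinuousLinearMap.proj i ∘L positions).hasFDerivAt)).add (hspring i)).add (hspring (i + 1))

theorem fderiv_Hloc_apply (hU1 : Differentiable ℝ U1) (hU2 : Differentiable ℝ U2)
    (i : Fin (n + 2)) (x v : Phs (n + 2) d) :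
    fderiv ℝ (Hloc U1 U2 i) x v =
      (∑ a, x.1 i a * v.1 i a) + fderiv ℝ U1 (x.2.1 i) (v.2.1 i)
        + 1 / 2 * springDeriv U2 i x.2.1 (cfgNat v.2.1 (i - 1) - v.2.1 i)
        + 1 / 2 * springDeriv U2 (i + 1) x.2.1 (v.2.1 i - cfgNat v.2.1 (i + 1)) := by
  rw [(hasFDerivAt_Hloc hU1 hU2 i x).fderiv]
  simp [momentum, positions, oscillator_apply, cfgNat_val]

theorem heatFlow_eq (lam : ℝ) (U2 : Vc d → ℝ) (j : ℕ) (x : Phs (n + 2) d) :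
    heatFlow lam U2 j x =
      1 / 2 * springDeriv U2 j x.2.1 (cfgNat x.1 (j - 1) + cfgNat x.1 j)
        - (if j = 0 then lam * ∑ a, x.2.2.1 a * x.1 0 a else 0)
        + (if j = n + 2 then lam * ∑ a, x.2.2.2 a * x.1 (Fin.last (n + 1)) a else 0) := by
  by_cases h0 : j = 0
  · simp [heatFlow, springDeriv, h0]
  by_cases hn : j = n + 2
  · simp [heatFlow, springDeriv, hn]
  simp only [heatFlow, springDeriv, h0, hn, or_self, if_false, sub_zero, add_zero]
  rw [← sum_mul_map_single, Finset.mul_sum]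
  refine Finset.sum_congr rfl fun a _ => ?_
  rw [Pi.add_apply]
  ring

theorem fderiv_Hloc_drift (hU1 : Differentiable ℝ U1) (hU2 : Differentiable ℝ U2) (lam : ℝ)
    (i : Fin (n + 2)) (x : Phs (n + 2) d) :
    fderiv ℝ (Hloc U1 U2 i) x (drift lam U1 U2 x) =
      heatFlow lam U2 i x - heatFlow lam U2 (i + 1) x := by
  have hvelocity : (drift lam U1 U2 x).2.1 = x.1 := rfl
  have hi : (i : ℕ) ≠ n + 2 := i.isLt.ne
  have hlast : (i : ℕ) + 1 = n + 2 ↔ i = Fin.last (n + 1) := by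
    rw [Fin.ext_iff, Fin.val_last]
    lia
  have hreservoir (k : Fin (n + 2)) (r : Vc d) :
      (if i = k then lam * ∑ a, r a * x.1 i a else 0) =
        if i = k then lam * ∑ a, r a * x.1 k a else 0 :=
    if_ctx_congr Iff.rfl (fun h => by rw [h]) fun _ => rfl
  rw [fderiv_Hloc_apply hU1 hU2, sum_mul_drift_momentum hU1 hU2, heatFlow_eq, heatFlow_eq,
    hvelocity, hreservoir, hreservoir]
  simp only [hlast, hi, Fin.val_eq_zero_iff, Nat.add_one_ne_zero, if_false, cfgNat_val, map_add,
    map_sub, Nat.add_sub_cancel]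
  ring

end EnergyBalance

section Gibbs

variable {T1 Tn : ℝ} {U1 U2 : Vc d → ℝ}

theorem hasFDerivAt_Rj (T1 Tn : ℝ) (hU1 : Differentiable ℝ U1) (hU2 : Differentiable ℝ U2)
    {j : ℕ} (hj : j ≤ n + 2) (x : Phs (n + 2) d) :
    HasFDerivAt (Rj T1 Tn U1 U2 j)
      ((1 / T1) • ((∑ a, x.2.2.1 a • ContinuousLinearMap.proj a ∘L leftBath)
          + ∑ k ∈ Finset.range j, fderiv ℝ (Hloc U1 U2 k) x)
        + (1 / Tn) • ((∑ k ∈ Finset.Ico j (n + 2), fderiv ℝ (Hloc U1 U2 k) x)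
          + ∑ a, x.2.2.2 a • ContinuousLinearMap.proj a ∘L rightBath)) x := by
  have hH (k : ℕ) (hk : k < n + 2) :
      HasFDerivAt (Hloc U1 U2 k) (fderiv ℝ (Hloc (n := n) U1 U2 k) x) x :=
    (hasFDerivAt_Hloc hU1 hU2 ⟨k, hk⟩ x).differentiableAt.hasFDerivAt
  exact (((hasFDerivAt_sum_sq_div_two leftBath x).add (HasFDerivAt.fun_sum fun k hk =>
      hH k ((Finset.mem_range.1 hk).trans_le hj))).const_mul (1 / T1)).add
    (((HasFDerivAt.fun_sum fun k hk => hH k (Finset.mem_Ico.1 hk).2).add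
      (hasFDerivAt_sum_sq_div_two rightBath x)).const_mul (1 / Tn))

theorem fderiv_Rj_apply (T1 Tn : ℝ) (hU1 : Differentiable ℝ U1) (hU2 : Differentiable ℝ U2)
    {j : ℕ} (hj : j ≤ n + 2) (x v : Phs (n + 2) d) :
    fderiv ℝ (Rj T1 Tn U1 U2 j) x v =
      1 / T1 * ((∑ a, x.2.2.1 a * v.2.2.1 a) + ∑ k ∈ Finset.range j, fderiv ℝ (Hloc U1 U2 k) x v)
        + 1 / Tn * ((∑ k ∈ Finset.Ico j (n + 2), fderiv ℝ (Hloc U1 U2 k) x v)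
          + ∑ a, x.2.2.2 a * v.2.2.2 a) := by
  rw [(hasFDerivAt_Rj T1 Tn hU1 hU2 hj x).fderiv]
  simp [leftBath, rightBath, mul_add]

theorem fderiv_Rj_bath (T1 Tn : ℝ) (hU1 : Differentiable ℝ U1) (hU2 : Differentiable ℝ U2)
    {j : ℕ} (hj : j ≤ n + 2) (x : Phs (n + 2) d) (w : Vc d × Vc d) :
    fderiv ℝ (Rj T1 Tn U1 U2 j) x (0, 0, w) =
      1 / T1 * (∑ a, x.2.2.1 a * w.1 a) + 1 / Tn * ∑ a, x.2.2.2 a * w.2 a := by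
  have hH (k : ℕ) (hk : k < n + 2) : fderiv ℝ (Hloc U1 U2 k) x (0, 0, w) = 0 := by
    have hcfg (k : ℕ) : cfgNat (0 : Cfg (n + 2) d) k = 0 := by
      rw [← oscillator_apply, map_zero]
    rw [fderiv_Hloc_apply hU1 hU2 ⟨k, hk⟩]
    simp [hcfg]
  rw [fderiv_Rj_apply T1 Tn hU1 hU2 hj,
    Finset.sum_eq_zero fun k hk => hH k ((Finset.mem_range.1 hk).trans_le hj),
    Finset.sum_eq_zero fun k hk => hH k (Finset.mem_Ico.1 hk).2, add_zero, zero_add]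

theorem mul_fderiv_Rj_eR1 (hT1 : T1 ≠ 0) (Tn : ℝ) (hU1 : Differentiable ℝ U1)
    (hU2 : Differentiable ℝ U2) {j : ℕ} (hj : j ≤ n + 2) (x : Phs (n + 2) d) (a : Fin d) :
    T1 * fderiv ℝ (Rj T1 Tn U1 U2 j) x (eR1 a) = x.2.2.1 a := by
  rw [eR1, fderiv_Rj_bath T1 Tn hU1 hU2 hj]
  simp [Pi.single_apply, hT1]

theorem mul_fderiv_Rj_eRn (T1 : ℝ) (hTn : Tn ≠ 0) (hU1 : Differentiable ℝ U1)
    (hU2 : Differentiable ℝ U2) {j : ℕ} (hj : j ≤ n + 2) (x : Phs (n + 2) d) (a : Fin d) :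
    Tn * fderiv ℝ (Rj T1 Tn U1 U2 j) x (eRn a) = x.2.2.2 a := by
  rw [eRn, fderiv_Rj_bath T1 Tn hU1 hU2 hj]
  simp [Pi.single_apply, hTn]

theorem fderiv_Rj_drift (lam T1 Tn : ℝ) (hU1 : Differentiable ℝ U1) (hU2 : Differentiable ℝ U2)
    {j : ℕ} (hj : j ≤ n + 2) (x : Phs (n + 2) d) :
    fderiv ℝ (Rj T1 Tn U1 U2 j) x (drift lam U1 U2 x) = sigmaEP lam T1 Tn U2 j x := by
  have htelescope (i : ℕ) (hi : i ≤ n + 2) :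
      ∑ k ∈ Finset.range i, fderiv ℝ (Hloc U1 U2 k) x (drift lam U1 U2 x) =
        heatFlow lam U2 0 x - heatFlow lam U2 i x := by
    rw [← Finset.sum_range_sub' (heatFlow lam U2 · x)]
    exact Finset.sum_congr rfl fun k hk =>
      fderiv_Hloc_drift hU1 hU2 lam ⟨k, (Finset.mem_range.1 hk).trans_le hi⟩ x
  have hleft : ∑ a, x.2.2.1 a * (drift lam U1 U2 x).2.2.1 a = -heatFlow lam U2 0 x := by
    simp [heatFlow, drift, Finset.mul_sum, mul_left_comm]
  have hright : ∑ a, x.2.2.2 a * (drift lam U1 U2 x).2.2.2 a = heatFlow lam U2 (n + 2) x := by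
    simp [heatFlow, drift, Finset.mul_sum, mul_left_comm]
  rw [fderiv_Rj_apply T1 Tn hU1 hU2 hj, Finset.sum_Ico_eq_sub _ hj, htelescope j hj,
    htelescope (n + 2) le_rfl, hleft, hright, sigmaEP]
  ring

end Gibbs

section Conjugation

variable {T1 Tn : ℝ} {U1 U2 : Vc d → ℝ}

theorem genT_exp_neg_Rj_mul (γ lam : ℝ) (hT1 : T1 ≠ 0) (hTn : Tn ≠ 0) (hU1 : Differentiable ℝ U1)
    (hU2 : Differentiable ℝ U2) {j : ℕ} (hj : j ≤ n + 2) {g : Phs (n + 2) d → ℝ}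
    (hg : ContDiff ℝ 2 g) (x : Phs (n + 2) d) :
    genT γ lam T1 Tn U1 U2 (fun y => Real.exp (-Rj T1 Tn U1 U2 j y) * g y) x =
      Real.exp (-Rj T1 Tn U1 U2 j x)
        * (gen γ lam T1 Tn U1 U2 (Jop g) (reversal x) + sigmaEP lam T1 Tn U2 j x * g x) := by
  have hR : Differentiable ℝ (Rj (n := n) T1 Tn U1 U2 j) := fun y =>
    (hasFDerivAt_Rj T1 Tn hU1 hU2 hj y).differentiableAt
  rw [genT_eq, gen_reversal, Jop_Jop,
    ornsteinUhlenbeckAdjoint_exp_neg_mul hR (by fun_prop) hg (mul_fderiv_Rj_eR1 hT1 Tn hU1 hU2 hj),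
    ornsteinUhlenbeckAdjoint_exp_neg_mul hR (by fun_prop) hg (mul_fderiv_Rj_eRn T1 hTn hU1 hU2 hj),
    fderiv_exp_neg_mul (hR x) (hg.differentiable two_ne_zero x),
    fderiv_Rj_drift lam T1 Tn hU1 hU2 hj]
  ring

theorem stmt3_general (n d : ℕ) (γ lam T1 Tn : ℝ) (hT1 : T1 ≠ 0) (hTn : Tn ≠ 0)
    (U1 U2 : Vc d → ℝ) (hU1 : Differentiable ℝ U1) (hU2 : Differentiable ℝ U2)
    (j : ℕ) (hj : j ≤ n + 2) (α : ℝ) (f : Phs (n + 2) d → ℝ) (hf : ContDiff ℝ 2 f)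
    (x : Phs (n + 2) d) :
    Real.exp (Rj T1 Tn U1 U2 j x)
        * Jop (fun y =>
            genT γ lam T1 Tn U1 U2 (fun z => Real.exp (-Rj T1 Tn U1 U2 j z) * Jop f z) y
              - α * sigmaEP lam T1 Tn U2 j y * (Real.exp (-Rj T1 Tn U1 U2 j y) * Jop f y)) x =
      gen γ lam T1 Tn U1 U2 f x - (1 - α) * sigmaEP lam T1 Tn U2 j x * f x := by
  have hJf : ContDiff ℝ 2 (Jop f) := hf.comp reversal.contDiff
  have hexp : Real.exp (Rj T1 Tn U1 U2 j x) * Real.exp (-Rj T1 Tn U1 U2 j x) = 1 := by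
    rw [← Real.exp_add, add_neg_cancel, Real.exp_zero]
  rw [Jop_apply, genT_exp_neg_Rj_mul γ lam hT1 hTn hU1 hU2 hj hJf, Jop_Jop, Jop_apply,
    reversal_reversal, Rj_reversal, sigmaEP_reversal]
  linear_combination
    (gen γ lam T1 Tn U1 U2 f x - (1 - α) * sigmaEP lam T1 Tn U2 j x * f x) * hexp

end Conjugation

/-- for every j ∈ {0,…,n+2}, α ∈ ℝ and smooth f one has
`e^{R_j} · J[(Lᵀ − ασ_j)(e^{−R_j}·(Jf))] = L f − (1−α) σ_j f`,
i.e. `L − ασ_j` is conjugate to the time reversal of the formal adjoint of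
`L − (1−α)σ_j`. -/
theorem stmt3 (n d : ℕ) (hd : 1 ≤ d) (γ lam T1 Tn : ℝ)
    (hγ : 0 < γ) (hlam : 0 < lam) (hT1 : 0 < T1) (hTn : 0 < Tn)
    (U1 U2 : Vc d → ℝ) (hU1 : ContDiff ℝ (⊤ : ℕ∞) U1) (hU2 : ContDiff ℝ (⊤ : ℕ∞) U2) :
    ∀ j : ℕ, j ≤ n + 2 → ∀ α : ℝ, ∀ f : Phs (n+2) d → ℝ, ContDiff ℝ (⊤ : ℕ∞) f →
      ∀ x : Phs (n+2) d,
        Real.exp (Rj T1 Tn U1 U2 j x)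
            * Jop (fun y =>
                genT γ lam T1 Tn U1 U2
                  (fun z => Real.exp (- Rj T1 Tn U1 U2 j z) * Jop f z) y
                - α * sigmaEP lam T1 Tn U2 j y
                    * (Real.exp (- Rj T1 Tn U1 U2 j y) * Jop f y)) x
          = gen γ lam T1 Tn U1 U2 f x
            - (1 - α) * sigmaEP lam T1 Tn U2 j x * f x := by
  intro j hj α f hf x
  exact stmt3_general n d γ lam T1 Tn hT1.ne' hTn.ne' U1 U2 (hU1.differentiable (by simp))
    (hU2.differentiable (by simp)) j hj α f (hf.of_le (by norm_cast)) x

end
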